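/- Let G be a finite directed graph in which every vertex has out-degree at least 2, fix a vertex x, and suppose the out-neighbourhood B_x^+(2h) of radius 2h contains at most one cycle (tree excess ≤ 1). Then for every t ≤ h, the probability that the simple random walk started at x has X_t outside the set V = {y : B_y^+(h) is a directed tree} is at most 2^{-t}. -/

import Mathlib

/-!
Breadth-first search spans the ball of radius `2h` around `x` by a forest whose number of edges is
one less than the number of vertices, so excess at most one leaves at most one ball edge
`e = (a, b)` outside the forest. If the ball of radius `h` around the endpoint of a walk of length
`t ≤ h` from `x` is not a tree, it contains `e`, so the walk extends to one ending at `a` and every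
vertex it visits is an ancestor of `a` in the forest, or `a` itself. From each vertex only one step
keeps this property: towards `a` along the forest, or along `e` once at `a`. Hence at most one walk
of length `t` ends at such a vertex, and it has probability at most `2^{-t}`.
-/

open Relation
open scoped Matrix

section Walks

variable {V : Type*} {N : V → Finset V} {m n k : ℕ} {p : ℕ → V} {a b c : V}

/-- Walks of length `m` in the digraph with out-neighbourhoods `N`. A walk is encoded by a function
on `ℕ`, of which only the values on `{0, …, m}` matter. -/
def IsWalk (N : V → Finset V) (m : ℕ) (p : ℕ → V) : Prop :=
  ∀ i < m, p (i + 1) ∈ N (p i)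

/-- Reachability of `b` from `a` in exactly `m` steps. -/
def HasWalk (N : V → Finset V) (m : ℕ) (a b : V) : Prop :=
  ∃ p : ℕ → V, p 0 = a ∧ p m = b ∧ IsWalk N m p

/-- The vertex set of the out-neighbourhood `B_a⁺(k)`. -/
def outBall (N : V → Finset V) (a : V) (k : ℕ) : Set V :=
  {u | ∃ m ≤ k, HasWalk N m a u}

/-- The edge set of the out-neighbourhood `B_a⁺(k)`, consisting of the edges traversed by walks of
length at most `k` from `a`. For `k = 0` truncated subtraction makes this the set of out-edges of
`a` instead of the empty set. -/
def outBallEdges (N : V → Finset V) (a : V) (k : ℕ) : Set (V × V) :=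
  {e | e.1 ∈ outBall N a (k - 1) ∧ e.2 ∈ N e.1}

/-- The vertices `y` whose out-neighbourhood `B_y⁺(h)` is a directed tree, that is, has tree excess
`0`. -/
def treeRoots (N : V → Finset V) (h : ℕ) : Set V :=
  {y | (outBallEdges N y h).ncard + 1 = (outBall N y h).ncard}

/-- Uniqueness of walks of length `t` from `x` to the set `B`. As walks are functions on `ℕ`, they
are only compared on `{0, …, t}`. -/
def AtMostOneWalkInto (N : V → Finset V) (t : ℕ) (x : V) (B : Set V) : Prop :=
  ∀ p q, IsWalk N t p → IsWalk N t q → p 0 = x → q 0 = x → p t ∈ B → q t ∈ B → ∀ i ≤ t, p i = q i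

lemma IsWalk.mono (hp : IsWalk N n p) (hmn : m ≤ n) : IsWalk N m p :=
  fun i hi ↦ hp i (hi.trans_le hmn)

lemma IsWalk.cons (hp : IsWalk N m p) (ha : p 0 ∈ N a) :
    IsWalk N (m + 1) (Nat.casesOn · a p) := by
  rintro (_ | i) hi
  · exact ha
  · exact hp i (by lia)

lemma IsWalk.hasWalk (hp : IsWalk N m p) : HasWalk N m (p 0) (p m) :=
  ⟨p, rfl, rfl, hp⟩

@[simp]
lemma hasWalk_zero : HasWalk N 0 a b ↔ a = b :=
  ⟨fun ⟨_, h0, h1, _⟩ ↦ h0.symm.trans h1, fun h ↦ ⟨fun _ ↦ a, rfl, h, by simp [IsWalk]⟩⟩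

lemma hasWalk_succ : HasWalk N (m + 1) a c ↔ ∃ b, HasWalk N m a b ∧ c ∈ N b := by
  constructor
  · rintro ⟨p, rfl, rfl, hp⟩
    exact ⟨p m, (hp.mono m.le_succ).hasWalk, hp m m.lt_succ_self⟩
  · rintro ⟨b, ⟨p, rfl, rfl, hp⟩, hc⟩
    refine ⟨fun i ↦ if i ≤ m then p i else c, by simp, by simp, fun i hi ↦ ?_⟩
    obtain hi | rfl := Nat.lt_succ_iff_lt_or_eq.1 hi
    · simpa [hi.le, Nat.succ_le_of_lt hi] using hp i hi
    · simpa using hc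

lemma HasWalk.trans (hab : HasWalk N m a b) (hbc : HasWalk N n b c) : HasWalk N (m + n) a c := by
  induction n generalizing c with
  | zero => rwa [← hasWalk_zero.1 hbc]
  | succ n ih =>
    obtain ⟨d, hbd, hc⟩ := hasWalk_succ.1 hbc
    exact hasWalk_succ.2 ⟨d, ih hbd, hc⟩

lemma AtMostOneWalkInto.first_step_unique {B : Set V} (hB : AtMostOneWalkInto N (m + 1) a B)
    (hb : b ∈ N a) (hc : c ∈ N a) (hbB : ∃ y ∈ B, HasWalk N m b y)
    (hcB : ∃ y ∈ B, HasWalk N m c y) : b = c := by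
  obtain ⟨_, hp, p, rfl, rfl, hpw⟩ := hbB
  obtain ⟨_, hq, q, rfl, rfl, hqw⟩ := hcB
  exact hB _ _ (hpw.cons hb) (hqw.cons hc) rfl rfl hp hq 1 (by lia)

lemma AtMostOneWalkInto.of_mem {B : Set V} (hB : AtMostOneWalkInto N (m + 1) a B)
    (hb : b ∈ N a) : AtMostOneWalkInto N m b B := by
  rintro p q hp hq rfl hqp hpB hqB i hi
  exact hB _ _ (hp.cons hb) (hq.cons (hqp ▸ hb)) rfl rfl hpB hqB (i + 1) (by lia)

lemma HasWalk.mem_outBall (hab : HasWalk N m a b) (hmk : m ≤ k) : b ∈ outBall N a k :=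
  ⟨m, hmk, hab⟩

lemma self_mem_outBall : a ∈ outBall N a k :=
  (hasWalk_zero.2 rfl).mem_outBall k.zero_le

lemma mem_outBall_trans (hb : b ∈ outBall N a m) (hc : c ∈ outBall N b n) :
    c ∈ outBall N a (m + n) := by
  obtain ⟨i, hi, hab⟩ := hb
  obtain ⟨j, hj, hbc⟩ := hc
  exact (hab.trans hbc).mem_outBall (by lia)

lemma outBall_mono (hmn : m ≤ n) : outBall N a m ⊆ outBall N a n :=
  fun _ ⟨_, hi, hab⟩ ↦ hab.mem_outBall (hi.trans hmn)

lemma outBallEdges_subset (hb : b ∈ outBall N a m) (hn : 0 < n) (hmn : m + n ≤ k) :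
    outBallEdges N b n ⊆ outBallEdges N a k :=
  fun _ he ↦ ⟨outBall_mono (by lia) (mem_outBall_trans hb he.1), he.2⟩

lemma IsWalk.edge_mem_outBallEdges (hp : IsWalk N m p) (hmk : m ≤ k) {i : ℕ} (hi : i < m) :
    (p i, p (i + 1)) ∈ outBallEdges N (p 0) k :=
  ⟨(hp.mono hi.le).hasWalk.mem_outBall (by lia), hp i hi⟩

lemma outBall_eq_insert (hk : 0 < k) :
    outBall N a k = insert a (Prod.snd '' outBallEdges N a k) := by
  ext v
  constructor
  · rintro ⟨_ | m, hm, hv⟩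
    · exact .inl (hasWalk_zero.1 hv).symm
    · obtain ⟨u, hu, huv⟩ := hasWalk_succ.1 hv
      exact .inr ⟨(u, v), ⟨hu.mem_outBall (by lia), huv⟩, rfl⟩
  · rintro (rfl | ⟨⟨u, v⟩, ⟨⟨m, hm, hu⟩, huv⟩, rfl⟩)
    · exact self_mem_outBall
    · exact (hasWalk_succ.2 ⟨u, hu, huv⟩).mem_outBall (by lia)

lemma finite_outBallEdges_of_finite_outBall (h : (outBall N a (k - 1)).Finite) :
    (outBallEdges N a k).Finite := by
  refine (h.biUnion fun u _ ↦ (N u).finite_toSet.image (Prod.mk u)).subset ?_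
  rintro ⟨u, v⟩ ⟨hu, hv⟩
  exact Set.mem_biUnion hu ⟨v, hv, rfl⟩

lemma finite_outBall : (outBall N a k).Finite := by
  induction k with
  | zero =>
    refine (Set.finite_singleton a).subset ?_
    rintro v ⟨m, hm, hv⟩
    obtain rfl := Nat.le_zero.1 hm
    exact (hasWalk_zero.1 hv).symm
  | succ k ih =>
    rw [outBall_eq_insert k.succ_pos]
    exact ((finite_outBallEdges_of_finite_outBall ih).image _).insert a

lemma finite_outBallEdges : (outBallEdges N a k).Finite :=
  finite_outBallEdges_of_finite_outBall finite_outBall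

/-- The directed distance from `a` to `v`, with junk value `0` if `v` is not reachable from `a`. -/
noncomputable def outDist (N : V → Finset V) (a v : V) : ℕ :=
  sInf {m | HasWalk N m a v}

lemma outDist_le (hab : HasWalk N m a b) : outDist N a b ≤ m :=
  Nat.sInf_le hab

lemma HasWalk.outDist (hab : HasWalk N m a b) : HasWalk N (outDist N a b) a b :=
  Nat.sInf_mem (s := {m | HasWalk N m a b}) ⟨m, hab⟩

lemma exists_bfs_parent (hb : b ∈ outBall N a k) (hne : b ≠ a) :
    ∃ u, (u, b) ∈ outBallEdges N a k ∧ outDist N a u < outDist N a b := by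
  obtain ⟨m, hm, hab⟩ := hb
  have hdist := outDist_le hab
  have hwalk := hab.outDist
  cases hd : outDist N a b with
  | zero => exact absurd (hasWalk_zero.1 (hd ▸ hwalk)).symm hne
  | succ d =>
    obtain ⟨u, hu, hub⟩ := hasWalk_succ.1 (hd ▸ hwalk)
    exact ⟨u, ⟨hu.mem_outBall (by lia), hub⟩, Nat.lt_succ_of_le (outDist_le hu)⟩

end Walks

section Forests

variable {V : Type*} {T : V → V → Prop} {a u v w : V}

/-- Directed forests: acyclic digraphs in which every vertex has at most one parent. -/
structure IsDirectedForest (T : V → V → Prop) : Prop where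
  parent_unique : Relator.LeftUnique T
  acyclic : ∀ v, ¬ TransGen T v v

namespace IsDirectedForest

lemma of_lt_depth (hT : Relator.LeftUnique T) (depth : V → ℕ)
    (hdepth : ∀ u v, T u v → depth u < depth v) : IsDirectedForest T where
  parent_unique := hT
  acyclic v hv := by
    have : TransGen (· < ·) (depth v) (depth v) := hv.lift depth hdepth
    exact lt_irrefl _ (transGen_eq_self (r := (· < · : ℕ → ℕ → Prop)) ▸ this)

lemma eq_of_reflTransGen_of_parent (hT : IsDirectedForest T) (huv : T u v) (huw : T u w)
    (hvw : ReflTransGen T v w) : v = w := by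
  obtain rfl | ⟨u', hvu', hu'w⟩ := hvw.cases_tail
  · rfl
  · obtain rfl := hT.parent_unique huw hu'w
    exact (hT.acyclic u (.head' huv hvu')).elim

lemma child_unique (hT : IsDirectedForest T) (huv : T u v) (huw : T u w)
    (hva : ReflTransGen T v a) (hwa : ReflTransGen T w a) : v = w := by
  have hunique : Relator.RightUnique (Function.swap T) := fun _ _ _ h h' ↦ hT.parent_unique h h'
  obtain hwv | hvw := ReflTransGen.total_of_right_unique hunique
    (reflTransGen_swap.2 hva) (reflTransGen_swap.2 hwa)
  · exact (hT.eq_of_reflTransGen_of_parent huw huv (reflTransGen_swap.1 hwv)).symm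
  · exact hT.eq_of_reflTransGen_of_parent huv huw (reflTransGen_swap.1 hvw)

lemma next_unique (hT : IsDirectedForest T) {e : V × V} (hv : T u v ∨ (u, v) = e)
    (hw : T u w ∨ (u, w) = e) (hva : ReflTransGen T v e.1) (hwa : ReflTransGen T w e.1) :
    v = w := by
  obtain hv | rfl := hv <;> obtain hw | hw := hw
  · exact hT.child_unique hv hw hva hwa
  · subst hw
    exact (hT.acyclic u (.head' hv hva)).elim
  · exact (hT.acyclic u (.head' hw hwa)).elim
  · exact (Prod.mk.inj hw).2.symm

end IsDirectedForest

lemma reflTransGen_of_forall_step {p : ℕ → V} {m i : ℕ}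
    (hstep : ∀ j < m, T (p j) (p (j + 1)) ∨ p j = a) (hend : ReflTransGen T (p m) a)
    (hi : i ≤ m) : ReflTransGen T (p i) a := by
  induction hi using Nat.decreasingInduction with
  | self => exact hend
  | of_succ j hj ih =>
    obtain hT | rfl := hstep j hj
    · exact .head hT ih
    · exact .refl

end Forests

section BallForests

variable {V : Type*} {N : V → Finset V} {T : V → V → Prop} {x y : V} {e : V × V} {h k t : ℕ}
  {p : ℕ → V}

lemma IsDirectedForest.mem_treeRoots (hT : IsDirectedForest T) (hh : 0 < h)
    (hyT : ∀ f ∈ outBallEdges N y h, T f.1 f.2) : y ∈ treeRoots N h := by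
  have hroot : y ∉ Prod.snd '' outBallEdges N y h := by
    rintro ⟨⟨u, _⟩, he, rfl⟩
    obtain ⟨m, hm, p, hp0, rfl, hp⟩ := he.1
    have hpT : ∀ i < m, T (p i) (p (i + 1)) := fun i hi ↦
      hyT _ (hp0 ▸ hp.edge_mem_outBallEdges (by lia) hi)
    have hreach := reflTransGen_of_forall_step (fun i hi ↦ .inl (hpT i hi)) .refl m.zero_le
    exact hT.acyclic _ (.tail' (hp0 ▸ hreach) (hyT _ he))
  have hinj : (outBallEdges N y h).InjOn Prod.snd := by
    rintro ⟨u, v⟩ hu ⟨u', _⟩ hu' rfl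
    exact Prod.ext (hT.parent_unique (hyT _ hu) (hyT _ hu')) rfl
  rw [treeRoots, Set.mem_ofPred_eq, outBall_eq_insert hh,
    Set.ncard_insert_of_notMem hroot (finite_outBallEdges.image _), hinj.ncard_image]

lemma exists_isDirectedForest_spanning_outBall (N : V → Finset V) (x : V) (k : ℕ) :
    ∃ T, IsDirectedForest T ∧ {e | T e.1 e.2} ⊆ outBallEdges N x k ∧
      {e : V × V | T e.1 e.2}.ncard + 1 = (outBall N x k).ncard := by
  choose! parent hparent using fun v (hv : v ∈ outBall N x k \ {x}) ↦ exists_bfs_parent hv.1 hv.2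
  let T : V → V → Prop := fun u v ↦ v ∈ outBall N x k \ {x} ∧ parent v = u
  have hedges : {e : V × V | T e.1 e.2} = (fun v ↦ (parent v, v)) '' (outBall N x k \ {x}) := by
    ext ⟨u, v⟩
    simp [T]
  refine ⟨T, .of_lt_depth ?_ (outDist N x) ?_, ?_, ?_⟩
  · exact fun u v u' hu hu' ↦ hu.2.symm.trans hu'.2
  · rintro _ v ⟨hv, rfl⟩
    exact (hparent v hv).2
  · rw [hedges]
    rintro _ ⟨v, hv, rfl⟩
    exact (hparent v hv).1
  · rw [hedges, Set.ncard_image_of_injective _ fun v w hvw ↦ (Prod.mk.inj hvw).2]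
    exact Set.ncard_sdiff_singleton_add_one self_mem_outBall finite_outBall

lemma exists_isDirectedForest_forall_edge_or_eq
    (hexcess : (outBallEdges N x k).ncard ≤ (outBall N x k).ncard) :
    ∃ T e, IsDirectedForest T ∧ ∀ f ∈ outBallEdges N x k, T f.1 f.2 ∨ f = e := by
  obtain ⟨T, hT, hsub, hcard⟩ := exists_isDirectedForest_spanning_outBall N x k
  have hdiff : (outBallEdges N x k \ {f | T f.1 f.2}).ncard ≤ 1 := by
    have := Set.ncard_sdiff_add_ncard_of_subset hsub finite_outBallEdges
    lia
  have : Nonempty (V × V) := ⟨(x, x)⟩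
  obtain ⟨e, he⟩ := (Set.ncard_le_one_iff_subset_singleton finite_outBallEdges.sdiff).1 hdiff
  exact ⟨T, e, hT, fun f hf ↦ or_iff_not_imp_left.2 fun hfT ↦ he ⟨hf, hfT⟩⟩

lemma reflTransGen_fst_of_notMem_treeRoots (hT : IsDirectedForest T)
    (hE : ∀ f ∈ outBallEdges N (p 0) (2 * h), T f.1 f.2 ∨ f = e) (hh : 0 < h) (hth : t ≤ h)
    (hp : IsWalk N t p) (hpt : p t ∉ treeRoots N h) {i : ℕ} (hi : i ≤ t) :
    ReflTransGen T (p i) e.1 := by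
  have hsub : outBallEdges N (p t) h ⊆ outBallEdges N (p 0) (2 * h) :=
    outBallEdges_subset (hp.hasWalk.mem_outBall le_rfl) hh (by lia)
  have hstep : ∀ f ∈ outBallEdges N (p 0) (2 * h), T f.1 f.2 ∨ f.1 = e.1 :=
    fun f hf ↦ (hE f hf).imp_right (congrArg Prod.fst)
  have he : e ∈ outBallEdges N (p t) h := by
    by_contra he
    exact hpt <| hT.mem_treeRoots hh fun f hf ↦
      (hE f (hsub hf)).resolve_right fun hfe ↦ he (hfe ▸ hf)
  obtain ⟨⟨m, hm, q, hq0, hqm, hq⟩, -⟩ := he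
  have hend : ReflTransGen T (p t) e.1 := hq0 ▸ reflTransGen_of_forall_step
    (fun j hj ↦ hstep _ (hsub (hq0 ▸ hq.edge_mem_outBallEdges (by lia) hj))) (hqm ▸ .refl) m.zero_le
  exact reflTransGen_of_forall_step
    (fun j hj ↦ hstep _ (hp.edge_mem_outBallEdges (by lia) hj)) hend hi

lemma atMostOneWalkInto_compl_treeRoots (hth : t ≤ h)
    (hexcess : (outBallEdges N x (2 * h)).ncard ≤ (outBall N x (2 * h)).ncard) :
    AtMostOneWalkInto N t x (treeRoots N h)ᶜ := by
  obtain ⟨T, e, hT, hE⟩ := exists_isDirectedForest_forall_edge_or_eq hexcess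
  rintro p q hp hq rfl hqp hpt hqt i hi
  induction i with
  | zero => exact hqp.symm
  | succ i ih =>
    have hpq : p i = q i := ih (by lia)
    have hpE := hE _ (hp.edge_mem_outBallEdges (by lia) hi)
    have hqE := hE _ (hqp ▸ hq.edge_mem_outBallEdges (by lia) hi)
    exact hT.next_unique hpE (hpq ▸ hqE)
      (reflTransGen_fst_of_notMem_treeRoots hT hE (by lia) hth hp hpt hi)
      (reflTransGen_fst_of_notMem_treeRoots hT (hqp ▸ hE) (by lia) hth hq hqt hi)

end BallForests

section WeightedWalks

variable {V R : Type*} [Fintype V]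

lemma sum_indicator_apply_eq_mulVec [NonAssocSemiring R] (M : Matrix V V R) (B : Set V) (x : V) :
    ∑ y, B.indicator (M x) y = (M *ᵥ B.indicator 1) x := by
  classical
  simp [Matrix.mulVec, dotProduct, Set.indicator_apply]

variable [DecidableEq V] {N : V → Finset V} {P : Matrix V V R} {x : V} {t : ℕ}

lemma exists_hasWalk_of_pow_mulVec_ne_zero [Semiring R] (hPN : ∀ u v, P u v ≠ 0 → v ∈ N u)
    {f : V → R} (hne : (P ^ t *ᵥ f) x ≠ 0) : ∃ y, f y ≠ 0 ∧ HasWalk N t x y := by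
  induction t generalizing f with
  | zero => exact ⟨x, by simpa using hne, hasWalk_zero.2 rfl⟩
  | succ t ih =>
    rw [pow_succ, ← Matrix.mulVec_mulVec] at hne
    obtain ⟨y, hy, hxy⟩ := ih hne
    obtain ⟨z, -, hz⟩ := Finset.exists_ne_zero_of_sum_ne_zero hy
    exact ⟨z, right_ne_zero_of_mul hz, hasWalk_succ.2 ⟨y, hxy, hPN y z (left_ne_zero_of_mul hz)⟩⟩

lemma AtMostOneWalkInto.pow_mulVec_indicator_le_pow [Semiring R] [PartialOrder R]
    [IsOrderedRing R] {r : R} {B : Set V} (hP : ∀ u v, 0 ≤ P u v) (hPr : ∀ u v, P u v ≤ r)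
    (hPN : ∀ u v, P u v ≠ 0 → v ∈ N u) (hB : AtMostOneWalkInto N t x B) :
    (P ^ t *ᵥ B.indicator 1) x ≤ r ^ t := by
  have hr : 0 ≤ r := (hP x x).trans (hPr x x)
  induction t generalizing x with
  | zero =>
    rw [pow_zero, pow_zero, Matrix.one_mulVec]
    exact Set.indicator_le_self' (fun _ _ ↦ zero_le_one (α := R)) x
  | succ t ih =>
    set mass : V → R := P ^ t *ᵥ B.indicator 1
    have hsplit : (P ^ (t + 1) *ᵥ B.indicator 1) x = ∑ v, P x v * mass v := by
      rw [pow_succ', ← Matrix.mulVec_mulVec]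
      rfl
    have hwalk : ∀ v, P x v * mass v ≠ 0 → v ∈ N x ∧ ∃ y ∈ B, HasWalk N t v y := by
      intro v hv
      obtain ⟨y, hy, hvy⟩ := exists_hasWalk_of_pow_mulVec_ne_zero hPN (right_ne_zero_of_mul hv)
      exact ⟨hPN x v (left_ne_zero_of_mul hv), y, Set.mem_of_indicator_ne_zero hy, hvy⟩
    rw [hsplit]
    by_cases hzero : ∀ v, P x v * mass v = 0
    · simpa [hzero] using pow_nonneg hr (t + 1)
    · obtain ⟨v, hv⟩ := not_forall.1 hzero
      obtain ⟨hxv, hvB⟩ := hwalk v hv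
      have hother : ∀ w ≠ v, P x w * mass w = 0 := by
        intro w hwv
        by_contra hw
        obtain ⟨hxw, hwB⟩ := hwalk w hw
        exact hwv (hB.first_step_unique hxw hxv hwB hvB)
      calc ∑ w, P x w * mass w = P x v * mass v := Fintype.sum_eq_single v hother
        _ ≤ P x v * r ^ t := mul_le_mul_of_nonneg_left (ih (hB.of_mem hxv)) (hP x v)
        _ ≤ r * r ^ t := mul_le_mul_of_nonneg_right (hPr x v) (pow_nonneg hr t)
        _ = r ^ (t + 1) := (pow_succ' r t).symm

theorem walk_leaves_tree_roots_prob_le_general [Semiring R] [PartialOrder R] [IsOrderedRing R]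
    {r : R} {h : ℕ} (hP : ∀ u v, 0 ≤ P u v) (hPr : ∀ u v, P u v ≤ r)
    (hPN : ∀ u v, P u v ≠ 0 → v ∈ N u) (hth : t ≤ h)
    (hexcess : (outBallEdges N x (2 * h)).ncard ≤ (outBall N x (2 * h)).ncard) :
    ∑ y, (treeRoots N h)ᶜ.indicator ((P ^ t) x) y ≤ r ^ t := by
  rw [sum_indicator_apply_eq_mulVec]
  exact (atMostOneWalkInto_compl_treeRoots hth hexcess).pow_mulVec_indicator_le_pow hP hPr hPN

end WeightedWalks

section SimpleWalk

variable {V : Type*} [DecidableEq V] {N : V → Finset V} {u v : V}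

/-- The transition matrix of the simple random walk on the digraph with out-neighbourhoods `N`.
The row of a vertex without out-neighbours is zero. -/
noncomputable def simpleWalk (N : V → Finset V) : Matrix V V ℝ :=
  fun u v ↦ if v ∈ N u then ((N u).card : ℝ)⁻¹ else 0

lemma simpleWalk_nonneg (N : V → Finset V) (u v : V) : 0 ≤ simpleWalk N u v := by
  unfold simpleWalk
  positivity

lemma simpleWalk_le_one_div {d : ℕ} (hd : 0 < d) (hdeg : d ≤ (N u).card) (v : V) :
    simpleWalk N u v ≤ 1 / d := by
  unfold simpleWalk
  split_ifs
  · rw [← one_div]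
    exact one_div_le_one_div_of_le (by exact_mod_cast hd) (by exact_mod_cast hdeg)
  · positivity

lemma mem_of_simpleWalk_ne_zero (h : simpleWalk N u v ≠ 0) : v ∈ N u :=
  of_not_not fun hv ↦ h (if_neg hv)

end SimpleWalk

/-- On a finite digraph with all out-degrees at least `2`, if the out-neighbourhood
`B_x⁺(2h)` of radius `2h` around `x` has tree excess at most `1`, then for every `t ≤ h`
the simple random walk started at `x` satisfies
`P_x(X_t ∉ {y : B_y⁺(h) is a directed tree}) ≤ 2^{-t}`. -/
theorem walk_leaves_tree_roots_prob_le
    {V : Type*} [Fintype V] [DecidableEq V]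
    (N : V → Finset V) (hdeg : ∀ v, 2 ≤ (N v).card)
    (x : V) (h t : ℕ) (ht : t ≤ h) :
    -- reachability within `k` steps
    let Reach : V → ℕ → V → Prop := fun a k b =>
      ∃ m ≤ k, ∃ p : ℕ → V, p 0 = a ∧ p m = b ∧ ∀ i < m, p (i + 1) ∈ N (p i)
    -- transition matrix of the simple random walk
    let P : Matrix V V ℝ := fun u v => if v ∈ N u then ((N u).card : ℝ)⁻¹ else 0
    -- vertices and edges of the out-neighbourhood of radius `k`
    let Bv : V → ℕ → Set V := fun a k => {u | Reach a k u}
    let Be : V → ℕ → Set (V × V) := fun a k => {e | Reach a (k - 1) e.1 ∧ e.2 ∈ N e.1}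
    -- tree excess `1 + |E| - |V|` of `B_x⁺(2h)` is at most `1`
    (Be x (2 * h)).ncard ≤ (Bv x (2 * h)).ncard →
    -- the probability that `X_t` is not an `h`-root is at most `2^{-t}`
    ∑ y, ({y : V | (Be y h).ncard + 1 = (Bv y h).ncard}ᶜ).indicator ((P ^ t) x) y ≤
      (1 / 2 : ℝ) ^ t := by
  exact walk_leaves_tree_roots_prob_le_general (simpleWalk_nonneg N)
    (fun u v ↦ mod_cast simpleWalk_le_one_div two_pos (hdeg u) v)
    (fun _ _ ↦ mem_of_simpleWalk_ne_zero) ht
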